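/- Assume hypotheses (H): b ≠ 0, b'' ≠ 0, |a'| + |a''| > 0, |a''| + |b''| > 0, |a'| + |b'| + |c'| > 0, a = 1, a'·b = b', a''·b = b'', b''·c = b·c'', and b'' = b·(b·c' − b'·c); set q = c + b·b'/b''. If −2 < q ≤ −√3, then the system has cycles of all possible periods: for every positive integer p there exists an initial point (x₀, y₀) with x₀ + b·y₀ + c > 0 such that the orbit (x_n, y_n) of the system is well-defined (all denominators a''·x_n + b''·y_n + c'' are nonzero) and periodic with minimal period exactly p. -/

import Mathlib

/-!
Put `u n = x n`. Under the hypotheses the system reduces to iterating `f u = u + 1 / u + q`,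
which preserves the positive half-line because `-2 < q`. By the Li–Yorke covering argument, it is
enough to find `v` whose orbit satisfies `f v < v < f (f v)` and `v ≤ f (f (f v))`: the intervals
`L = [f v, v]` and `R = [v, f (f v)]` satisfy `L ∪ R ⊆ f(L)` and `L ⊆ f(R)`, and the itinerary
`R, L, …, L, R` then has a periodic point. For `q = -√3` such a `v` lies on an explicit `3`-cycle,
and the same `v` works whenever `-2 < q ≤ -√3`.
-/

open Set Function

section PeriodThree

variable {α β : Type*} [ConditionallyCompleteLinearOrder α] [TopologicalSpace α] [OrderTopology α]
  [DenselyOrdered α] [LinearOrder β] [TopologicalSpace β] [OrderClosedTopology β]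

/- Start at the last point with value `f a` and stop at the first later point with value `f b`. -/
theorem exists_image_Icc_eq_Icc_of_le {f : α → β} {a b : α} (hf : ContinuousOn f (Icc a b))
    (hab : a ≤ b) (hfab : f a ≤ f b) :
    ∃ a' b', a' ≤ b' ∧ Icc a' b' ⊆ Icc a b ∧ f '' Icc a' b' = Icc (f a) (f b) := by
  have exists_isGreatest_level : ∃ a', IsGreatest (Icc a b ∩ f ⁻¹' {f a}) a' :=
    (isCompact_Icc.of_isClosed_subset (hf.preimage_isClosed_of_isClosed isClosed_Icc
      isClosed_singleton) inter_subset_left).exists_isGreatest ⟨a, left_mem_Icc.2 hab, rfl⟩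
  obtain ⟨a', ⟨ha', hfa'⟩, le_a'⟩ := exists_isGreatest_level
  have hf' : ContinuousOn f (Icc a' b) := hf.mono (Icc_subset_Icc_left ha'.1)
  have exists_isLeast_level : ∃ b', IsLeast (Icc a' b ∩ f ⁻¹' {f b}) b' :=
    (isCompact_Icc.of_isClosed_subset (hf'.preimage_isClosed_of_isClosed isClosed_Icc
      isClosed_singleton) inter_subset_left).exists_isLeast ⟨b, right_mem_Icc.2 ha'.2, rfl⟩
  obtain ⟨b', ⟨hb', hfb'⟩, b'_le⟩ := exists_isLeast_level
  rw [mem_preimage, mem_singleton_iff] at hfa' hfb'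
  refine ⟨a', b', hb'.1, Icc_subset_Icc ha'.1 hb'.2, Subset.antisymm ?_ ?_⟩
  · rintro _ ⟨x, hx, rfl⟩
    constructor
    · by_contra! hlt
      obtain ⟨y, hy, hfy⟩ := intermediate_value_Icc (hx.2.trans hb'.2)
        (hf'.mono (Icc_subset_Icc_left hx.1)) ⟨hlt.le, hfab⟩
      have : y ≤ a' := le_a' ⟨⟨ha'.1.trans (hx.1.trans hy.1), hy.2⟩, hfy⟩
      obtain rfl : x = y := le_antisymm hy.1 (this.trans hx.1)
      exact hlt.ne hfy
    · by_contra! hlt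
      obtain ⟨y, hy, hfy⟩ := intermediate_value_Icc hx.1
        (hf'.mono (Icc_subset_Icc_right (hx.2.trans hb'.2))) ⟨hfa'.trans_le hfab, hlt.le⟩
      have : b' ≤ y := b'_le ⟨⟨hy.1, hy.2.trans (hx.2.trans hb'.2)⟩, hfy⟩
      obtain rfl : x = y := le_antisymm (hx.2.trans this) hy.2
      exact hlt.ne' hfy
  · simpa only [hfa', hfb'] using intermediate_value_Icc hb'.1
      (hf'.mono (Icc_subset_Icc_right hb'.2))

theorem exists_image_Icc_eq_Icc_of_surjOn {f : α → β} {a b : α} {c d : β}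
    (hf : ContinuousOn f (Icc a b)) (hcd : c ≤ d) (h : SurjOn f (Icc a b) (Icc c d)) :
    ∃ a' b', a' ≤ b' ∧ Icc a' b' ⊆ Icc a b ∧ f '' Icc a' b' = Icc c d := by
  obtain ⟨s, hs, rfl⟩ := h (left_mem_Icc.2 hcd)
  obtain ⟨t, ht, rfl⟩ := h (right_mem_Icc.2 hcd)
  rcases le_total s t with hst | hts
  · have hsub : Icc s t ⊆ Icc a b := Icc_subset_Icc hs.1 ht.2
    obtain ⟨a', b', hab', hsub', himage⟩ :=
      exists_image_Icc_eq_Icc_of_le (hf.mono hsub) hst hcd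
    exact ⟨a', b', hab', hsub'.trans hsub, himage⟩
  · have hsub : Icc t s ⊆ Icc a b := Icc_subset_Icc ht.1 hs.2
    obtain ⟨a', b', hab', hsub', himage⟩ :=
      exists_image_Icc_eq_Icc_of_le (β := βᵒᵈ) (hf.mono hsub) hts hcd
    exact ⟨a', b', hab', hsub'.trans hsub, himage.trans Icc_toDual⟩

theorem exists_Icc_itinerary {f : α → α} {A B : ℕ → α} (hAB : ∀ i, A i ≤ B i)
    (hf : ∀ i, ContinuousOn f (Icc (A i) (B i)))
    (hcover : ∀ i, SurjOn f (Icc (A i) (B i)) (Icc (A (i + 1)) (B (i + 1)))) (n : ℕ) :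
    ∃ a b, a ≤ b ∧ ContinuousOn f^[n] (Icc a b) ∧ f^[n] '' Icc a b = Icc (A n) (B n) ∧
      ∀ i ≤ n, MapsTo f^[i] (Icc a b) (Icc (A i) (B i)) := by
  induction n with
  | zero => exact ⟨A 0, B 0, hAB 0, continuousOn_id, image_id _,
      fun i hi => by simp [Nat.le_zero.1 hi, mapsTo_id]⟩
  | succ n ih =>
    obtain ⟨a, b, _, hcont, himage, hmaps⟩ := ih
    have hcont' : ContinuousOn f^[n + 1] (Icc a b) := by
      rw [iterate_succ']
      exact (hf n).comp hcont (hmaps n le_rfl)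
    have hsurj : SurjOn f^[n + 1] (Icc a b) (Icc (A (n + 1)) (B (n + 1))) := by
      rw [iterate_succ']
      exact (hcover n).comp himage.ge
    obtain ⟨a', b', hab', hsub, himage'⟩ :=
      exists_image_Icc_eq_Icc_of_surjOn hcont' (hAB (n + 1)) hsurj
    refine ⟨a', b', hab', hcont'.mono hsub, himage', fun i hi => ?_⟩
    rcases Nat.le_succ_iff.1 hi with hi | rfl
    · exact (hmaps i hi).mono_left hsub
    · exact mapsTo_iff_image_subset.2 himage'.le

theorem exists_isPeriodicPt_of_itinerary {f : α → α} {A B : ℕ → α} (hAB : ∀ i, A i ≤ B i)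
    (hf : ∀ i, ContinuousOn f (Icc (A i) (B i)))
    (hcover : ∀ i, SurjOn f (Icc (A i) (B i)) (Icc (A (i + 1)) (B (i + 1)))) {n : ℕ}
    (hn : Icc (A 0) (B 0) ⊆ Icc (A n) (B n)) :
    ∃ x, IsPeriodicPt f n x ∧ ∀ i ≤ n, f^[i] x ∈ Icc (A i) (B i) := by
  obtain ⟨a, b, hab, hcont, himage, hmaps⟩ := exists_Icc_itinerary hAB hf hcover n
  have hsurj : SurjOn f^[n] (Icc a b) (Icc a b) :=
    (hmaps 0 n.zero_le).subset_preimage.trans (hn.trans himage.ge)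
  obtain ⟨x, hx, hfix⟩ := exists_mem_Icc_isFixedPt_of_surjOn hcont hab hsurj
  exact ⟨x, hfix, fun i hi => hmaps i hi hx⟩

theorem exists_isPeriodicPt_forall_iterate_mem_Icc {f : α → α} {w v z : α} {p : ℕ} (hp : 2 ≤ p)
    (hwv : w ≤ v) (hvz : v ≤ z) (hf : ContinuousOn f (Icc w z)) (hfw : z ≤ f w) (hfv : f v ≤ w)
    (hfz : v ≤ f z) :
    ∃ x ∈ Icc v z, IsPeriodicPt f p x ∧ ∀ i, 0 < i → i < p → f^[i] x ∈ Icc w v := by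
  have hL : SurjOn f (Icc w v) (Icc w z) :=
    (Icc_subset_Icc hfv hfw).trans
      (intermediate_value_Icc' hwv (hf.mono (Icc_subset_Icc_right hvz)))
  have hR : SurjOn f (Icc v z) (Icc w v) :=
    (Icc_subset_Icc hfv hfz).trans (intermediate_value_Icc hvz (hf.mono (Icc_subset_Icc_left hwv)))
  let A : ℕ → α := fun i => if p ∣ i then v else w
  let B : ℕ → α := fun i => if p ∣ i then z else v
  have hAB : ∀ i, A i ≤ B i := fun i => by dsimp only [A, B]; split_ifs <;> assumption
  have hsub : ∀ i, Icc (A i) (B i) ⊆ Icc w z := fun i => by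
    dsimp only [A, B]
    split_ifs
    exacts [Icc_subset_Icc_left hwv, Icc_subset_Icc_right hvz]
  have hcover : ∀ i, SurjOn f (Icc (A i) (B i)) (Icc (A (i + 1)) (B (i + 1))) := fun i => by
    by_cases hi : p ∣ i
    · have hi' : ¬p ∣ i + 1 := fun h => by
        have := Nat.le_of_dvd one_pos ((Nat.dvd_add_right hi).1 h)
        lia
      simpa only [A, B, if_pos hi, if_neg hi'] using hR
    · simpa only [A, B, if_neg hi] using hL.mono subset_rfl (hsub (i + 1))
  obtain ⟨x, hper, hx⟩ := exists_isPeriodicPt_of_itinerary (n := p) hAB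
    (fun i => hf.mono (hsub i)) hcover (by simp [A, B])
  refine ⟨x, by simpa [A, B] using hx 0 p.zero_le, hper, fun i hi hip => ?_⟩
  simpa only [A, B, if_neg (Nat.not_dvd_of_pos_of_lt hi hip)] using hx i hip.le

theorem exists_minimalPeriod_eq_of_period_three {f : α → α} {w v z : α} {p : ℕ} (hp : 0 < p)
    (hwv : w < v) (hvz : v < z) (hf : ContinuousOn f (Icc w z)) (hfw : z ≤ f w) (hfv : f v ≤ w)
    (hfz : v ≤ f z) : ∃ x ∈ Icc w z, minimalPeriod f x = p := by
  obtain rfl | hp2 : p = 1 ∨ 2 ≤ p := by lia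
  · obtain ⟨x, hx, hfix⟩ := exists_mem_Icc_isFixedPt (hf.mono (Icc_subset_Icc_right hvz.le))
      hwv.le (hwv.le.trans (hvz.le.trans hfw)) (hfv.trans hwv.le)
    exact ⟨x, Icc_subset_Icc_right hvz.le hx, minimalPeriod_eq_one_iff_isFixedPt.2 hfix⟩
  · obtain ⟨x, hx, hper, hreturn⟩ :=
      exists_isPeriodicPt_forall_iterate_mem_Icc hp2 hwv.le hvz.le hf hfw hfv hfz
    refine ⟨x, Icc_subset_Icc_left hwv.le hx, (hper.minimalPeriod_le hp).antisymm ?_⟩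
    by_contra! hlt
    have hpos : 0 < minimalPeriod f x := hper.minimalPeriod_pos hp
    -- A premature return puts the orbit at the common endpoint of the two intervals.
    have hx_left : x ∈ Icc w v := by
      simpa only [iterate_minimalPeriod] using hreturn _ hpos hlt
    obtain rfl : x = v := le_antisymm hx_left.2 hx.1
    have hfx : f x = w := hfv.antisymm (hreturn 1 one_pos hp2).1
    have hp_ne : p ≠ 2 := by
      rintro rfl
      have : IsFixedPt f x := minimalPeriod_eq_one_iff_isFixedPt.1 (by lia)
      exact hwv.ne (hfx.symm.trans this)
    have hffx : f w ≤ x := by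
      simpa only [iterate_succ_apply, iterate_zero_apply, hfx] using
        (hreturn 2 two_pos (by lia)).2
    exact (hvz.trans_le (hfw.trans hffx)).false

end PeriodThree

/-- The first-order recurrence `u ↦ u + 1 / u + q` to which the planar system reduces, with
`u n = x n`; the normalisation `a'' * b = b''`, `b'' * c = b * c''` makes the denominator of the
system a multiple of `u (n + 1)`. -/
def reducedMap {K : Type*} [Field K] (q u : K) : K := u + 1 / u + q

theorem reducedMap_sub_reducedMap {K : Type*} [Field K] (q : K) {u v : K} (hu : u ≠ 0)
    (hv : v ≠ 0) :
    reducedMap q u - reducedMap q v = (u - v) * (1 - 1 / (u * v)) := by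
  unfold reducedMap
  field

section OrderedField

variable {K : Type*} [Field K] [LinearOrder K] [IsStrictOrderedRing K] {q u v w z : K}

theorem add_two_le_reducedMap (hu : 0 < u) : q + 2 ≤ reducedMap q u := by
  have h : reducedMap q u = (u - 1) ^ 2 / u + (q + 2) := by
    unfold reducedMap
    field
  rw [h]
  have : 0 ≤ (u - 1) ^ 2 / u := by positivity
  linarith

theorem mapsTo_reducedMap_Ioi (hq : -2 < q) : MapsTo (reducedMap q) (Ioi 0) (Ioi 0) :=
  fun u hu => (show 0 < q + 2 by linarith).trans_le (add_two_le_reducedMap hu)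

theorem reducedMap_add_le_of_le_half (hu : 0 < u) (huv : u ≤ v) (hv : v ≤ 1 / 2) :
    reducedMap q v + 3 * (v - u) ≤ reducedMap q u := by
  have hv0 : 0 < v := hu.trans_le huv
  have four_le : 4 ≤ 1 / (u * v) := by
    rw [le_div_iff₀ (by positivity)]
    nlinarith
  have hsub := reducedMap_sub_reducedMap q hu.ne' hv0.ne'
  nlinarith

theorem reducedMap_add_le_of_three_halves_le (hu : 3 / 2 ≤ u) (huv : u ≤ v) :
    reducedMap q u + (v - u) / 2 ≤ reducedMap q v := by
  have hu0 : 0 < u := by linarith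
  have hv0 : 0 < v := hu0.trans_le huv
  have le_half : 1 / (v * u) ≤ 1 / 2 := one_div_le_one_div_of_le two_pos (by nlinarith)
  have hsub := reducedMap_sub_reducedMap q hv0.ne' hu0.ne'
  nlinarith

/- Lowering `q` by `δ` lowers `w` by `δ`, which the steep branch near `0` turns into a gain of at
least `2 * δ` at `z`; the last step keeps at least half of it, which pays for the final loss. -/
theorem reducedMap_three_cycle_persists {q₀ : K} (hq : q ≤ q₀) (hpos : 0 < reducedMap q v)
    (hv : reducedMap q₀ v = w) (hw : reducedMap q₀ w = z) (hz : reducedMap q₀ z = v)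
    (hw_le : w ≤ 1 / 2) (hz_ge : 3 / 2 ≤ z) :
    reducedMap q v ≤ w ∧ z ≤ reducedMap q (reducedMap q v) ∧
      v ≤ reducedMap q (reducedMap q (reducedMap q v)) := by
  have hshift (u : K) : reducedMap q u = reducedMap q₀ u - (q₀ - q) := by
    unfold reducedMap
    ring
  have hv' : reducedMap q v = w - (q₀ - q) := by rw [hshift, hv]
  have hw' : z + 2 * (q₀ - q) ≤ reducedMap q (reducedMap q v) := by
    have := reducedMap_add_le_of_le_half (q := q) hpos (by linarith) hw_le
    linarith [hshift w]
  have hz' := reducedMap_add_le_of_three_halves_le (q := q) hz_ge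
    (show z ≤ reducedMap q (reducedMap q v) by linarith)
  exact ⟨by linarith, by linarith, by linarith [hshift z]⟩

end OrderedField

theorem continuousOn_reducedMap {K : Type*} [Field K] [TopologicalSpace K]
    [IsTopologicalDivisionRing K] (q : K) : ContinuousOn (reducedMap q) {0}ᶜ := by
  have : ∀ u ∈ ({0}ᶜ : Set K), u ≠ 0 := fun u hu => hu
  unfold reducedMap
  fun_prop (disch := assumption)

theorem reducedMap_neg_sqrt_three {x y : ℝ} (hx : x ≠ 0) (h : x ^ 2 - 3 * x + 3 = x * y) :
    reducedMap (-√3) (x / √3) = y / √3 := by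
  have hsq : √3 ^ 2 = 3 := Real.sq_sqrt (by norm_num)
  have hs : √3 ≠ 0 := by positivity
  unfold reducedMap
  field_simp
  linear_combination h + (1 - x) * hsq

theorem exists_mem_Icc_cubic_eq_zero :
    ∃ t ∈ Icc (8 / 5 : ℝ) (17 / 10), t ^ 3 - 6 * t ^ 2 + 9 * t - 3 = 0 :=
  intermediate_value_Icc' (f := fun t : ℝ => t ^ 3 - 6 * t ^ 2 + 9 * t - 3) (by norm_num)
    (by fun_prop) (by constructor <;> norm_num)

/- Multiplied by `√3`, the points of this cycle are the three roots of `t³ - 6 t² + 9 t - 3`, on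
which the rescaled map inverts `t ↦ t (4 - t)`. -/
theorem exists_three_cycle_reducedMap_neg_sqrt_three :
    ∃ w v z : ℝ, 0 < w ∧ w ≤ 1 / 2 ∧ w < v ∧ v < z ∧ 3 / 2 ≤ z ∧
      reducedMap (-√3) v = w ∧ reducedMap (-√3) w = z ∧ reducedMap (-√3) z = v := by
  obtain ⟨t, ⟨ht_ge, ht_le⟩, ht⟩ := exists_mem_Icc_cubic_eq_zero
  have hs : 0 < √3 := by positivity
  have hs_ge : 17 / 10 ≤ √3 := Real.le_sqrt_of_sq_le (by norm_num)
  have hs_le : √3 ≤ 9 / 5 := (Real.sqrt_le_left (by norm_num)).2 (by norm_num)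
  have hw_pos : 0 < (t - 2) * (t - 3) := by nlinarith
  have hz_pos : 0 < t * (4 - t) := by nlinarith
  refine ⟨(t - 2) * (t - 3) / √3, t / √3, t * (4 - t) / √3, by positivity, ?_, ?_, ?_, ?_,
    reducedMap_neg_sqrt_three (by linarith) ?_, reducedMap_neg_sqrt_three hw_pos.ne' ?_,
    reducedMap_neg_sqrt_three hz_pos.ne' ?_⟩
  · rw [div_le_iff₀ hs]
    nlinarith
  · gcongr
    nlinarith
  · gcongr
    nlinarith
  · rw [le_div_iff₀ hs]
    nlinarith
  · linear_combination -ht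
  · linear_combination (2 * t - 7) * ht
  · linear_combination (t - 1) * ht

theorem exists_minimalPeriod_reducedMap_eq {q : ℝ} (hq : -2 < q) (hq' : q ≤ -√3) {p : ℕ}
    (hp : 0 < p) : ∃ u > 0, minimalPeriod (reducedMap q) u = p := by
  obtain ⟨w, v, z, hw, hw_le, hwv, hvz, hz_ge, hFv, hFw, hFz⟩ :=
    exists_three_cycle_reducedMap_neg_sqrt_three
  have hpos : 0 < reducedMap q v := mapsTo_reducedMap_Ioi hq (hw.trans hwv)
  obtain ⟨hv, hz, hv'⟩ := reducedMap_three_cycle_persists hq' hpos hFv hFw hFz hw_le hz_ge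
  obtain ⟨u, hu, hper⟩ := exists_minimalPeriod_eq_of_period_three hp (hv.trans_lt hwv)
    (hvz.trans_le hz) ((continuousOn_reducedMap q).mono fun x hx => (hpos.trans_le hx.1).ne')
    le_rfl le_rfl hv'
  exact ⟨u, hpos.trans_le hu.1, hper⟩

section Planar

variable {K : Type*} [Field K] {b c : K} {u : ℕ → K}

/-- The coordinate `y n` of the planar orbit with `x n = u n`, recovered from
`x (n + 1) = x n + b * y n + c`. -/
def secondCoord (b c : K) (u : ℕ → K) (n : ℕ) : K := (u (n + 1) - u n - c) / b

theorem add_mul_secondCoord_add (hb : b ≠ 0) (n : ℕ) :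
    u n + b * secondCoord b c u n + c = u (n + 1) := by
  unfold secondCoord
  field

theorem denominator_secondCoord (hb : b ≠ 0) (a'' : K) (n : ℕ) :
    a'' * u n + a'' * b * secondCoord b c u n + a'' * c = a'' * u (n + 1) := by
  linear_combination a'' * add_mul_secondCoord_add (c := c) (u := u) hb n

theorem secondCoord_succ {a' c' a'' q : K} (hb : b ≠ 0) (ha'' : a'' ≠ 0)
    (hdet : a'' = b * (c' - a' * c)) (hq : q = c + b * a' / a'') {n : ℕ} (hu : u (n + 1) ≠ 0)
    (hstep : u (n + 2) = reducedMap q (u (n + 1))) :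
    secondCoord b c u (n + 1) =
      (a' * u n + a' * b * secondCoord b c u n + c') /
        (a'' * u n + a'' * b * secondCoord b c u n + a'' * c) := by
  have hnum : a' * u n + a' * b * secondCoord b c u n + c' = a' * u (n + 1) + (c' - a' * c) := by
    linear_combination a' * add_mul_secondCoord_add (c := c) (u := u) hb n
  rw [denominator_secondCoord hb, hnum, secondCoord, hstep, reducedMap, hq]
  field_simp
  linear_combination hdet

theorem periodic_secondCoord {p : ℕ} (hu : Periodic u p) : Periodic (secondCoord b c u) p :=
  fun n => by rw [secondCoord, secondCoord, hu n, Nat.add_right_comm, hu (n + 1)]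

end Planar

/-- Under hypotheses (H) with `−2 < q ≤ −√3`, the system has cycles of all
possible periods: for every positive integer `p` there is a well-defined orbit
with `x₀ + b·y₀ + c > 0` that is periodic with minimal period exactly `p`. -/
theorem stmt_12 (a b c a' b' c' a'' b'' c'' q : ℝ)
    (hb : b ≠ 0) (hb'' : b'' ≠ 0)
    (hnt1 : |a'| + |a''| > 0) (hnt2 : |a''| + |b''| > 0)
    (hnt3 : |a'| + |b'| + |c'| > 0)
    (ha : a = 1) (h1 : a' * b = b') (h2 : a'' * b = b'') (h3 : b'' * c = b * c'')
    (h4 : b'' = b * (b * c' - b' * c))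
    (hq : q = c + b * b' / b'') (hq1 : -2 < q) (hq2 : q ≤ -Real.sqrt 3) :
    ∀ p : ℕ, 0 < p →
      ∃ x y : ℕ → ℝ,
        x 0 + b * y 0 + c > 0 ∧
        (∀ n : ℕ, a'' * x n + b'' * y n + c'' ≠ 0) ∧
        (∀ n : ℕ, x (n + 1) = x n + b * y n + c) ∧
        (∀ n : ℕ, y (n + 1) =
          (a' * x n + b' * y n + c') / (a'' * x n + b'' * y n + c'')) ∧
        (∀ n : ℕ, (x (n + p), y (n + p)) = (x n, y n)) ∧
        (∀ m : ℕ, 0 < m → (∀ n : ℕ, (x (n + m), y (n + m)) = (x n, y n)) →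
          p ≤ m) := by
  intro p hp
  subst h1 h2
  have ha'' : a'' ≠ 0 := left_ne_zero_of_mul hb''
  obtain rfl : a'' * c = c'' := mul_left_cancel₀ hb (by linear_combination h3)
  have hdet : a'' = b * (c' - a' * c) := mul_right_cancel₀ hb (by linear_combination h4)
  have hq' : q = c + b * a' / a'' := by rw [hq, ← mul_assoc, mul_div_mul_right _ _ hb]
  obtain ⟨s, hs, hper⟩ := exists_minimalPeriod_reducedMap_eq hq1 hq2 hp
  let u : ℕ → ℝ := fun n => (reducedMap q)^[n] s
  have hpos (n : ℕ) : 0 < u n := (mapsTo_reducedMap_Ioi hq1).iterate n hs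
  have hstep (n : ℕ) : u (n + 1) = reducedMap q (u n) := iterate_succ_apply' _ n s
  have hperiodic : Periodic u p := fun n => by simp only [u, ← hper, iterate_add_minimalPeriod_eq]
  refine ⟨u, secondCoord b c u, ?_, fun n => ?_, fun n => (add_mul_secondCoord_add hb n).symm,
    fun n => secondCoord_succ hb ha'' hdet hq' (hpos _).ne' (hstep _),
    fun n => Prod.ext (hperiodic n) (periodic_secondCoord hperiodic n), fun m hm hreturn => ?_⟩
  · exact (add_mul_secondCoord_add hb 0).symm ▸ hpos 1
  · rw [denominator_secondCoord hb]
    exact mul_ne_zero ha'' (hpos _).ne'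
  · have hm_return : u m = u 0 := by simpa only [zero_add] using congrArg Prod.fst (hreturn 0)
    exact hper ▸ IsPeriodicPt.minimalPeriod_le hm hm_return
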